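/- arXiv:1312.6943 — 7 statements merged into one kernel-verified Lean document; each statement's English description precedes it below -/
import Mathlib

section
/- For every α > 0 and all a, b > 0, the α-stable convolution of the measures Exp_{⋆_α}(a δ_1) and Exp_{⋆_α}(b δ_1) equals Exp_{⋆_α}((a+b) δ_1); that is, the pushforward of Exp_{⋆_α}(a δ_1) ⊗ Exp_{⋆_α}(b δ_1) under the map (x,y) ↦ (x^α + y^α)^{1/α} equals e^{−(a+b)} ∑_{k=0}^{∞} ((a+b)^k/k!) δ_{k^{1/α}}. -/
/-!
The map `k ↦ k ^ (1 / α)` pushes the Poisson law of rate `a` on `ℕ` forward to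
`Exp_{⋆_α}(a δ_1)`, and it is a homomorphism from `(ℕ, +)` to `[0, ∞)` with the operation
`(x, y) ↦ (x ^ α + y ^ α) ^ (1 / α)`. It therefore carries the ordinary convolution identity
`Po(a) ∗ Po(b) = Po(a + b)` to the corresponding identity for the α-stable convolution.
-/

open MeasureTheory

/-- The α-stable generalized convolution of two measures on `[0,∞)`:
the pushforward of the product measure under `(x, y) ↦ (x^α + y^α)^(1/α)`. -/
noncomputable def stableConv (α : ℝ) (μ ν : Measure ℝ) : Measure ℝ :=
  (μ.prod ν).map (fun p : ℝ × ℝ => (p.1 ^ α + p.2 ^ α) ^ (1 / α))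

/-- The ⋆_α-generalized Poisson measure `Exp_{⋆_α}(a δ_1) = e^{-a} ∑_k (a^k/k!) δ_{k^{1/α}}`. -/
noncomputable def expStable (α a : ℝ) : Measure ℝ :=
  Measure.sum (fun k : ℕ =>
    ENNReal.ofReal (Real.exp (-a) * a ^ k / k.factorial) •
      Measure.dirac ((k : ℝ) ^ (1 / α)))

open ProbabilityTheory
open scoped NNReal

lemma stableConv_map {M : Type*} [AddMonoid M] [MeasurableSpace M] [MeasurableAdd₂ M]
    {α : ℝ} {f : M → ℝ} (hf : Measurable f)
    (hadd : ∀ x y, f (x + y) = (f x ^ α + f y ^ α) ^ (1 / α))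
    (μ ν : Measure M) [SFinite μ] [SFinite ν] :
    stableConv α (μ.map f) (ν.map f) = (μ ∗ ν).map f := by
  have hcomp : (fun p : ℝ × ℝ => (p.1 ^ α + p.2 ^ α) ^ (1 / α)) ∘ Prod.map f f =
      f ∘ fun p : M × M => p.1 + p.2 := funext fun p => (hadd p.1 p.2).symm
  rw [stableConv, Measure.conv, Measure.map_prod_map μ ν hf hf,
    Measure.map_map (by fun_prop) (hf.prodMap hf), hcomp, Measure.map_map hf measurable_add]

lemma add_rpow_one_div_eq {α x y : ℝ} (hα : α ≠ 0) (hx : 0 ≤ x) (hy : 0 ≤ y) :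
    (x + y) ^ (1 / α) = ((x ^ (1 / α)) ^ α + (y ^ (1 / α)) ^ α) ^ (1 / α) := by
  simp only [one_div, Real.rpow_inv_rpow hx hα, Real.rpow_inv_rpow hy hα]

lemma expStable_eq_map_poissonMeasure (α : ℝ) (r : ℝ≥0) :
    expStable α r = (poissonMeasure r).map (fun k : ℕ => (k : ℝ) ^ (1 / α)) := by
  simp only [expStable, poissonMeasure, Measure.map_sum Measurable.of_discrete.aemeasurable,
    Measure.map_smul, Measure.map_dirac' Measurable.of_discrete]

theorem stableConv_expStable (α a b : ℝ) (hα : 0 < α) (ha : 0 < a) (hb : 0 < b) :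
    stableConv α (expStable α a) (expStable α b) = expStable α (a + b) := by
  lift a to ℝ≥0 using ha.le
  lift b to ℝ≥0 using hb.le
  have hadd (j k : ℕ) : ((j + k : ℕ) : ℝ) ^ (1 / α) =
      (((j : ℝ) ^ (1 / α)) ^ α + ((k : ℝ) ^ (1 / α)) ^ α) ^ (1 / α) := by
    rw [Nat.cast_add, add_rpow_one_div_eq hα.ne' j.cast_nonneg k.cast_nonneg]
  rw [← NNReal.coe_add, expStable_eq_map_poissonMeasure, expStable_eq_map_poissonMeasure,
    expStable_eq_map_poissonMeasure, stableConv_map .of_discrete hadd,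
    poissonMeasure_conv_poissonMeasure]
end

section
/- Let α > 0, c > 0, x ≥ 0, and let f : [0,∞) → ℝ be bounded and measurable. Then lim_{z → 0⁺} (1/z)·[ e^{−cz} ∑_{k=0}^{∞} ((cz)^k/k!) f((x^α + k)^{1/α}) − f(x) ] = c·( f((x^α + 1)^{1/α}) − f(x) ). (This is the infinitesimal operator of the ⋆_α-generalized Poisson process of type I, whose transition probability from x over a time increment z is δ_x ⋆_α Exp_{⋆_α}(cz δ_1) = e^{−cz} ∑_{k=0}^{∞} ((cz)^k/k!) δ_{(x^α+k)^{1/α}}.) -/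
open MeasureTheory Filter

open Asymptotics Topology
open scoped Nat

/-!
Write `g k = f ((x ^ α + k) ^ (1 / α))` and `w = c z`. The Poisson mean of `g` is
`e^{-w} ∑ w^k/k! g k`, the product of `e^{-w}`, whose derivative at `0` is `-1`, and of a power
series in `w`, whose derivative at `0` is its linear coefficient `g 1`; the series converges for
every `w` as soon as `g` grows at most geometrically. The limit is therefore
`c` times the derivative `g 1 - g 0` of this product at `w = 0`, and `g 0 = f x`.
-/

section PowerSeries

variable {𝕜 E : Type*} [NormedAddCommGroup E]

lemma hasDerivAt_zero_of_hasSum_pow_smul [NontriviallyNormedField 𝕜] [NormedSpace 𝕜 E]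
    {a : ℕ → E} {F : 𝕜 → E} (hF : ∀ᶠ w in 𝓝 0, HasSum (fun k => w ^ k • a k) (F w)) :
    HasDerivAt F (a 1) 0 := by
  let p : FormalMultilinearSeries 𝕜 𝕜 E := fun k => .mkPiRing 𝕜 (Fin k) (a k)
  have hp : HasFPowerSeriesAt F p 0 := by
    rw [hasFPowerSeriesAt_iff]
    simpa [FormalMultilinearSeries.coeff, p] using hF
  simpa [p] using hp.hasDerivAt

variable [RCLike 𝕜] [NormedSpace 𝕜 E] [CompleteSpace E] {g : ℕ → E} {r : ℝ}

lemma summable_pow_div_factorial_smul (hg : g =O[atTop] (r ^ ·)) (w : 𝕜) :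
    Summable fun k : ℕ => (w ^ k / k ! : 𝕜) • g k := by
  refine summable_of_isBigO_nat (Real.summable_pow_div_factorial (‖w‖ * r)) ?_
  have hw : (fun k : ℕ => (w ^ k / k ! : 𝕜)) =O[atTop] fun k => ‖w‖ ^ k / (k ! : ℝ) :=
    .of_norm_le fun k => by simp
  refine (hw.smul hg).congr_right fun k => ?_
  rw [smul_eq_mul, mul_pow, div_mul_eq_mul_div]

lemma hasDerivAt_tsum_pow_div_factorial_smul_zero (hg : g =O[atTop] (r ^ ·)) :
    HasDerivAt (fun w : 𝕜 => ∑' k : ℕ, (w ^ k / k ! : 𝕜) • g k) (g 1) 0 := by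
  have hsum (w : 𝕜) : HasSum (fun k => w ^ k • (k ! : 𝕜)⁻¹ • g k)
      (∑' k : ℕ, (w ^ k / k ! : 𝕜) • g k) := by
    simpa only [smul_smul, div_eq_mul_inv] using (summable_pow_div_factorial_smul hg w).hasSum
  simpa using hasDerivAt_zero_of_hasSum_pow_smul (.of_forall hsum)

end PowerSeries

section PoissonMean

variable {E : Type*} [NormedAddCommGroup E] [NormedSpace ℝ E]

/-- The mean `∑ e^{-w} w^k/k! g k` of the sequence `g` under the Poisson distribution of rate `w`.
The rate is an arbitrary real number rather than an element of `ℝ≥0`, so that the mean can be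
differentiated at `w = 0`. -/
noncomputable def poissonMean (g : ℕ → E) (w : ℝ) : E :=
  ∑' k : ℕ, (Real.exp (-w) * w ^ k / k !) • g k

lemma poissonMean_eq_exp_neg_smul_tsum (g : ℕ → E) (w : ℝ) :
    poissonMean g w = Real.exp (-w) • ∑' k : ℕ, (w ^ k / k !) • g k := by
  simp only [poissonMean, mul_div_assoc, mul_smul, tsum_const_smul'']

lemma tsum_zero_pow_div_factorial_smul (g : ℕ → E) :
    ∑' k : ℕ, ((0 : ℝ) ^ k / k !) • g k = g 0 := by
  rw [tsum_eq_single 0 fun k hk => by simp [hk]]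
  simp

lemma poissonMean_zero (g : ℕ → E) : poissonMean g 0 = g 0 := by
  simp [poissonMean_eq_exp_neg_smul_tsum, tsum_zero_pow_div_factorial_smul]

lemma hasDerivAt_poissonMean_zero [CompleteSpace E] {g : ℕ → E} {r : ℝ}
    (hg : g =O[atTop] (r ^ ·)) : HasDerivAt (poissonMean g) (g 1 - g 0) 0 := by
  have hexp : HasDerivAt (fun w : ℝ => Real.exp (-w)) (-1) 0 := by
    simpa using (hasDerivAt_neg (0 : ℝ)).exp
  have hmul := hexp.fun_smul (hasDerivAt_tsum_pow_div_factorial_smul_zero hg)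
  simpa [← poissonMean_eq_exp_neg_smul_tsum, tsum_zero_pow_div_factorial_smul,
    ← sub_eq_add_neg] using hmul

lemma tendsto_inv_smul_poissonMean_sub [CompleteSpace E] {g : ℕ → E} {r : ℝ}
    (hg : g =O[atTop] (r ^ ·)) (c : ℝ) :
    Tendsto (fun z : ℝ => z⁻¹ • (poissonMean g (c * z) - g 0)) (𝓝[≠] 0)
      (𝓝 (c • (g 1 - g 0))) := by
  have hderiv : HasDerivAt (fun z => poissonMean g (c * z)) (c • (g 1 - g 0)) 0 := by
    have hg' : HasDerivAt (poissonMean g) (g 1 - g 0) (c * 0) := by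
      simpa using hasDerivAt_poissonMean_zero hg
    exact hg'.scomp 0 (by simpa using (hasDerivAt_id (0 : ℝ)).const_mul c)
  simpa [poissonMean_zero] using hderiv.tendsto_slope_zero

theorem infinitesimal_stable_typeI_general [CompleteSpace E] {α x r : ℝ} (hα : 0 < α)
    (hx : 0 ≤ x) (c : ℝ) {f : ℝ → E}
    (hf : (fun k : ℕ => f ((x ^ α + k) ^ (1 / α))) =O[atTop] (r ^ ·)) :
    Tendsto
      (fun z : ℝ => z⁻¹ • ((∑' k : ℕ, (Real.exp (-(c * z)) * (c * z) ^ k / k !) •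
        f ((x ^ α + k) ^ (1 / α))) - f x))
      (𝓝[≠] 0) (𝓝 (c • (f ((x ^ α + 1) ^ (1 / α)) - f x))) := by
  simpa [poissonMean, Real.rpow_rpow_inv hx hα.ne'] using tendsto_inv_smul_poissonMean_sub hf c

end PoissonMean

/-- The infinitesimal operator of the ⋆_α-generalized Poisson process of type I:
for bounded measurable `f`,
`lim_{z→0⁺} (1/z)·[∫ f d(δ_x ⋆_α Exp_{⋆_α}(cz δ_1)) - f(x)] = c(f((x^α+1)^{1/α}) - f(x))`. -/
theorem infinitesimal_stable_typeI (α c x : ℝ) (hα : 0 < α) (hc : 0 < c) (hx : 0 ≤ x)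
    (f : ℝ → ℝ) (hf_meas : Measurable f) (hf_bdd : ∃ M, ∀ y, |f y| ≤ M) :
    Tendsto
      (fun z : ℝ =>
        ((∑' k : ℕ, Real.exp (-(c * z)) * (c * z) ^ k / k.factorial *
            f ((x ^ α + k) ^ (1 / α))) - f x) / z)
      (nhdsWithin 0 (Set.Ioi 0))
      (nhds (c * (f ((x ^ α + 1) ^ (1 / α)) - f x))) := by
  obtain ⟨M, hM⟩ := hf_bdd
  have hf : (fun k : ℕ => f ((x ^ α + k) ^ (1 / α))) =O[atTop] ((1 : ℝ) ^ ·) :=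
    .of_bound M (.of_forall fun k => by simpa using hM _)
  simpa only [smul_eq_mul, div_eq_inv_mul] using
    (infinitesimal_stable_typeI_general hα hx c hf).mono_left (nhdsGT_le_nhdsNE 0)
end

section
/- Let α > 0 and 0 ≤ x ≤ y with y > 0, and let ρ_{x,y} = (x/y)^α · Π_y + (1 − (x/y)^α) δ_y, where Π_y is the measure on (y,∞) with density 2α y^{2α} t^{−2α−1}. Then for every t > 0, ∫_{[0,∞)} (1 − u^α/t^α)_+ ρ_{x,y}(du) = (1 − x^α/t^α)_+ · (1 − y^α/t^α)_+, where (r)_+ = max(r,0). (This is the multiplicativity of the Kendall-convolution homomorphism h(δ_t) = (1−t^α)_+ on the Kendall probability kernel δ_x △_α δ_y = ρ_{x,y}.) -/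
/-!
The square of the positive part is differentiable, so on `(0,∞)` the function `(u^{-α} - s)_+²` is
an antiderivative of `-2α u^{-2α-1} (1 - s u^α)_+`, with no cutoff at `s u^α = 1`. Hence the Pareto
law of index `2α` on `(y,∞)` gives `(1 - s u^α)_+` the mean `p²`, where `p = (1 - s y^α)_+` is its
value at `y`. With `q = (x/y)^α`, the kernel averages this to `q p² + (1 - q) p`, and
`q (1 - b) + (1 - q) = 1 - q b` factors out the value `(1 - s x^α)_+` at `x`.
-/

open MeasureTheory

/-- The Kendall probability kernel `δ_x △_α δ_y = (x/y)^α Π_y + (1-(x/y)^α) δ_y` for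
`0 ≤ x ≤ y`, `y > 0`, where `Π_y` is the measure on `(y,∞)` with density `2α y^{2α} t^{-2α-1}`. -/
noncomputable def kendallKernel (α x y : ℝ) : Measure ℝ :=
  ENNReal.ofReal ((x / y) ^ α) •
      ((volume.restrict (Set.Ioi y)).withDensity
        (fun t => ENNReal.ofReal (2 * α * y ^ (2 * α) * t ^ (-(2 * α) - 1))))
    + ENNReal.ofReal (1 - (x / y) ^ α) • Measure.dirac y

open ProbabilityTheory Set Filter Topology

theorem hasDerivAt_max_zero_sq (v : ℝ) :
    HasDerivAt (fun v : ℝ => max v 0 ^ 2) (2 * max v 0) v := by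
  have hcont : Continuous fun v : ℝ => max v 0 ^ 2 := by fun_prop
  have hcont_deriv : Continuous fun v : ℝ => 2 * max v 0 := by fun_prop
  refine hasDerivAt_of_hasDerivAt_of_ne' (x := 0) (fun w hw => ?_)
    hcont.continuousAt hcont_deriv.continuousAt v
  rcases hw.lt_or_gt with hneg | hpos
  · have hzero : (fun v : ℝ => max v 0 ^ 2) =ᶠ[𝓝 w] fun _ => 0 := by
      filter_upwards [Iio_mem_nhds hneg] with v hv
      rw [max_eq_right (mem_Iio.1 hv).le, zero_pow two_ne_zero]
    rw [max_eq_right hneg.le, mul_zero]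
    exact (hasDerivAt_const w 0).congr_of_eventuallyEq hzero
  · have hsq : (fun v : ℝ => max v 0 ^ 2) =ᶠ[𝓝 w] fun v => v ^ 2 := by
      filter_upwards [Ioi_mem_nhds hpos] with v hv
      rw [max_eq_left (mem_Ioi.1 hv).le]
    rw [max_eq_left hpos.le]
    simpa using (hasDerivAt_pow 2 w).congr_of_eventuallyEq hsq

theorem convexComb_max_one_sub {q : ℝ} (hq₀ : 0 ≤ q) (hq₁ : q ≤ 1) (b : ℝ) :
    q * max (1 - b) 0 ^ 2 + (1 - q) * max (1 - b) 0 = max (1 - q * b) 0 * max (1 - b) 0 := by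
  rcases le_total 1 b with hb | hb
  · rw [max_eq_right (sub_nonpos.2 hb)]
    ring
  · have hqb : q * b ≤ 1 := by nlinarith
    rw [max_eq_left (sub_nonneg.2 hb), max_eq_left (sub_nonneg.2 hqb)]
    ring

section Pareto

variable {y r : ℝ}

theorem paretoMeasure_eq_withDensity_restrict_Ioi (y r : ℝ) :
    paretoMeasure y r = (volume.restrict (Ioi y)).withDensity
      fun u => ENNReal.ofReal (r * y ^ r * u ^ (-r - 1)) := by
  have hpdf : paretoPDF y r =
      (Ici y).indicator fun u => ENNReal.ofReal (r * y ^ r * u ^ (-r - 1)) := by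
    ext u
    by_cases hu : y ≤ u
    · rw [paretoPDF_of_le hu, indicator_of_mem (mem_Ici.2 hu), neg_add']
    · rw [paretoPDF_of_lt (not_le.1 hu), indicator_of_notMem (notMem_Ici.2 (not_le.1 hu))]
  rw [paretoMeasure, hpdf, withDensity_indicator measurableSet_Ici,
    Measure.restrict_congr_set Ioi_ae_eq_Ici]

theorem toReal_ofReal_paretoDensity (hy : 0 ≤ y) (hr : 0 ≤ r) {u : ℝ} (hu : y < u) :
    (ENNReal.ofReal (r * y ^ r * u ^ (-r - 1))).toReal = r * y ^ r * u ^ (-r - 1) :=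
  have := hy.trans_lt hu
  ENNReal.toReal_ofReal (by positivity)

variable {E : Type*} [NormedAddCommGroup E] [NormedSpace ℝ E]

theorem integrable_paretoMeasure_iff (hy : 0 ≤ y) (hr : 0 ≤ r) {f : ℝ → E} :
    Integrable f (paretoMeasure y r) ↔
      IntegrableOn (fun u => (r * y ^ r * u ^ (-r - 1)) • f u) (Ioi y) := by
  rw [paretoMeasure_eq_withDensity_restrict_Ioi, integrable_withDensity_iff_integrable_smul'
    (by fun_prop) (ae_of_all _ fun _ => ENNReal.ofReal_lt_top)]
  refine integrableOn_congr_fun (fun u hu => ?_) measurableSet_Ioi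
  rw [toReal_ofReal_paretoDensity hy hr hu]

theorem integral_paretoMeasure (hy : 0 ≤ y) (hr : 0 ≤ r) (f : ℝ → E) :
    ∫ u, f u ∂(paretoMeasure y r) = ∫ u in Ioi y, (r * y ^ r * u ^ (-r - 1)) • f u := by
  rw [paretoMeasure_eq_withDensity_restrict_Ioi, integral_withDensity_eq_integral_toReal_smul
    (by fun_prop) (ae_of_all _ fun _ => ENNReal.ofReal_lt_top)]
  refine setIntegral_congr_fun measurableSet_Ioi fun u hu => ?_
  rw [toReal_ofReal_paretoDensity hy hr hu]

end Pareto

section PositivePart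

variable {α s u y : ℝ}

theorem max_one_sub_mul_rpow_eq_rpow_mul_max (hu : 0 < u) (α s : ℝ) :
    max (1 - s * u ^ α) 0 = u ^ α * max (u ^ (-α) - s) 0 := by
  have hinv : u ^ α * u ^ (-α) = 1 := by rw [← Real.rpow_add hu, add_neg_cancel, Real.rpow_zero]
  rw [mul_max_of_nonneg _ _ (by positivity), mul_zero, mul_sub, hinv, mul_comm s]

theorem hasDerivAt_max_rpow_neg_sub_sq (hu : 0 < u) (α s : ℝ) :
    HasDerivAt (fun u : ℝ => max (u ^ (-α) - s) 0 ^ 2)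
      (-(2 * α * u ^ (-(2 * α) - 1) * max (1 - s * u ^ α) 0)) u := by
  have hexp : u ^ (-α - 1) = u ^ (-(2 * α) - 1) * u ^ α := by
    rw [← Real.rpow_add hu]
    ring_nf
  refine ((hasDerivAt_max_zero_sq _).comp u
    ((Real.hasDerivAt_rpow_const (Or.inl hu.ne')).sub_const s)).congr_deriv ?_
  rw [max_one_sub_mul_rpow_eq_rpow_mul_max hu, hexp]
  ring

theorem tendsto_max_rpow_neg_sub_sq_atTop (hα : 0 < α) (hs : 0 ≤ s) :
    Tendsto (fun u : ℝ => max (u ^ (-α) - s) 0 ^ 2) atTop (𝓝 0) := by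
  have hcont : Continuous fun v : ℝ => max (v - s) 0 ^ 2 := by fun_prop
  simpa [hs, Function.comp_def] using (hcont.tendsto 0).comp (tendsto_rpow_neg_atTop hα)

theorem integrableOn_Ioi_rpow_mul_max (hα : 0 < α) (hs : 0 ≤ s) (hy : 0 < y) :
    IntegrableOn (fun u => 2 * α * u ^ (-(2 * α) - 1) * max (1 - s * u ^ α) 0) (Ioi y) := by
  refine integrableOn_Ioi_deriv_of_nonneg'
    (fun u hu => ?_) (fun u hu => ?_) (tendsto_max_rpow_neg_sub_sq_atTop hα hs).neg
  · simpa only [neg_neg] using (hasDerivAt_max_rpow_neg_sub_sq (hy.trans_le hu) α s).fun_neg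
  · have := hy.trans hu
    positivity

theorem integral_Ioi_rpow_mul_max (hα : 0 < α) (hs : 0 ≤ s) (hy : 0 < y) :
    ∫ u in Ioi y, 2 * α * u ^ (-(2 * α) - 1) * max (1 - s * u ^ α) 0
      = max (y ^ (-α) - s) 0 ^ 2 := by
  have hftc := integral_Ioi_of_hasDerivAt_of_tendsto'
    (fun u hu => hasDerivAt_max_rpow_neg_sub_sq (hy.trans_le hu) α s)
    (integrableOn_Ioi_rpow_mul_max hα hs hy).neg (tendsto_max_rpow_neg_sub_sq_atTop hα hs)
  rwa [integral_neg, zero_sub, neg_inj] at hftc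

theorem integrable_max_one_sub_mul_rpow_paretoMeasure (hα : 0 < α) (hs : 0 ≤ s) (hy : 0 < y) :
    Integrable (fun u => max (1 - s * u ^ α) 0) (paretoMeasure y (2 * α)) := by
  rw [integrable_paretoMeasure_iff hy.le (by positivity)]
  simpa only [IntegrableOn, smul_eq_mul, mul_assoc, mul_left_comm (y ^ (2 * α))] using
    (integrableOn_Ioi_rpow_mul_max hα hs hy).const_mul (y ^ (2 * α))

theorem integral_max_one_sub_mul_rpow_paretoMeasure (hα : 0 < α) (hs : 0 ≤ s) (hy : 0 < y) :
    ∫ u, max (1 - s * u ^ α) 0 ∂(paretoMeasure y (2 * α)) = max (1 - s * y ^ α) 0 ^ 2 := by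
  have hsq : y ^ (2 * α) = (y ^ α) ^ 2 := by
    rw [mul_comm, Real.rpow_mul hy.le, Real.rpow_two]
  calc ∫ u, max (1 - s * u ^ α) 0 ∂(paretoMeasure y (2 * α))
      = ∫ u in Ioi y, y ^ (2 * α) * (2 * α * u ^ (-(2 * α) - 1) * max (1 - s * u ^ α) 0) := by
        rw [integral_paretoMeasure hy.le (by positivity)]
        simp only [smul_eq_mul, mul_assoc, mul_left_comm (y ^ (2 * α))]
    _ = y ^ (2 * α) * max (y ^ (-α) - s) 0 ^ 2 := by
        rw [integral_const_mul, integral_Ioi_rpow_mul_max hα hs hy]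
    _ = max (1 - s * y ^ α) 0 ^ 2 := by
        rw [hsq, ← mul_pow, max_one_sub_mul_rpow_eq_rpow_mul_max hy]

end PositivePart

theorem kendallKernel_eq_paretoMeasure_add_dirac (α x y : ℝ) :
    kendallKernel α x y = ENNReal.ofReal ((x / y) ^ α) • paretoMeasure y (2 * α)
      + ENNReal.ofReal (1 - (x / y) ^ α) • Measure.dirac y := by
  rw [kendallKernel, paretoMeasure_eq_withDensity_restrict_Ioi]

theorem div_rpow_mem_Icc {α x y : ℝ} (hα : 0 ≤ α) (hx : 0 ≤ x) (hxy : x ≤ y) :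
    (x / y) ^ α ∈ Icc 0 1 := by
  have hdiv : 0 ≤ x / y := div_nonneg hx (hx.trans hxy)
  exact ⟨Real.rpow_nonneg hdiv α,
    Real.rpow_le_one hdiv (div_le_one_of_le₀ hxy (hx.trans hxy)) hα⟩

theorem integral_kendallKernel {E : Type*} [NormedAddCommGroup E] [NormedSpace ℝ E]
    [CompleteSpace E] {α x y : ℝ} (hα : 0 ≤ α) (hx : 0 ≤ x) (hxy : x ≤ y) {f : ℝ → E}
    (hf : Integrable f (paretoMeasure y (2 * α))) :
    ∫ u, f u ∂(kendallKernel α x y)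
      = (x / y) ^ α • ∫ u, f u ∂(paretoMeasure y (2 * α)) + (1 - (x / y) ^ α) • f y := by
  obtain ⟨hq₀, hq₁⟩ := div_rpow_mem_Icc hα hx hxy
  have hdirac : Integrable f (Measure.dirac y) := integrable_dirac enorm_lt_top
  rw [kendallKernel_eq_paretoMeasure_add_dirac,
    integral_add_measure (hf.smul_measure ENNReal.ofReal_ne_top)
      (hdirac.smul_measure ENNReal.ofReal_ne_top),
    integral_smul_measure, integral_smul_measure, integral_dirac,
    ENNReal.toReal_ofReal hq₀, ENNReal.toReal_ofReal (sub_nonneg.2 hq₁)]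

/-- Multiplicativity of the Kendall homomorphism `h(δ_t) = (1-t^α)_+` on the Kendall kernel:
`∫ (1 - u^α/t^α)_+ ρ_{x,y}(du) = (1 - x^α/t^α)_+ (1 - y^α/t^α)_+`. -/
theorem kendallKernel_homomorphism (α x y t : ℝ) (hα : 0 < α)
    (hx : 0 ≤ x) (hxy : x ≤ y) (hy : 0 < y) (ht : 0 < t) :
    ∫ u, max (1 - u ^ α / t ^ α) 0 ∂(kendallKernel α x y)
      = max (1 - x ^ α / t ^ α) 0 * max (1 - y ^ α / t ^ α) 0 := by
  have hs : 0 ≤ (t ^ α)⁻¹ := by positivity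
  obtain ⟨hq₀, hq₁⟩ := div_rpow_mem_Icc hα.le hx hxy
  have hx_eq : (t ^ α)⁻¹ * x ^ α = (x / y) ^ α * ((t ^ α)⁻¹ * y ^ α) := by
    rw [Real.div_rpow hx hy.le]
    field_simp
  simp only [div_eq_inv_mul _ (t ^ α)]
  rw [integral_kendallKernel hα.le hx hxy (integrable_max_one_sub_mul_rpow_paretoMeasure hα hs hy),
    integral_max_one_sub_mul_rpow_paretoMeasure hα hs hy, smul_eq_mul, smul_eq_mul,
    convexComb_max_one_sub hq₀ hq₁, hx_eq]
end

section
/- Let α > 0 and a > 0, and define the measure μ = e^{−a} δ_0 + a e^{−a} δ_1 + λ, where λ is the measure on (1,∞) with density a² α u^{−2α−1} e^{−a u^{−α}}. Then μ is a probability measure on [0,∞) and for every t ≥ 0, ∫_{[0,∞)} (1 − (ut)^α)_+ μ(du) = exp{ −a(1 − (1 − t^α)_+) }, where (r)_+ = max(r,0). (Hence μ is the Kendall generalized Poisson measure Exp_{△_α}(a δ_1).) -/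
open MeasureTheory

/-!
Substituting `w = u ^ (-α)` and writing `s = t ^ α`, the density of `λ` times the Kendall kernel
becomes `a² (w - s)₊ e^{-a w} dw` on `(0, 1)`. The primitive `(a (w - s) + 1) e^{-a w}` of
`-a² (w - s) e^{-a w}` has zero derivative at `w = s`, so replacing `w` by `max w s` in it gives a
differentiable primitive of the truncated integrand. One application of the fundamental theorem of
calculus on `(1, ∞)` thus computes the transform of `λ` for all `t ≥ 0` at once. At `t = 0` the
kernel is `1`, so the value of the transform there is the total mass.
-/

namespace KendallPoisson

open Filter Set Topology

section General

variable {E : Type*} [NormedAddCommGroup E] [NormedSpace ℝ E]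

lemma hasDerivAt_comp_max_of_eq_zero {f f' : ℝ → E} {s : ℝ}
    (hf : ∀ x, s ≤ x → HasDerivAt f (f' x) x) (hs : f' s = 0) (x : ℝ) :
    HasDerivAt (fun y => f (max y s)) (f' (max x s)) x := by
  rcases lt_trichotomy x s with hlt | rfl | hgt
  · rw [max_eq_right hlt.le, hs]
    refine (hasDerivAt_const x (f s)).congr_of_eventuallyEq ?_
    filter_upwards [Iio_mem_nhds hlt] with y hy
    rw [max_eq_right (le_of_lt hy)]
  · have left : HasDerivWithinAt (fun y => f (max y x)) 0 (Iic x) x :=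
      (hasDerivWithinAt_const x (Iic x) (f x)).congr
        (fun y hy => by rw [max_eq_right hy]) (by rw [max_self])
    have right : HasDerivWithinAt (fun y => f (max y x)) 0 (Ici x) x :=
      (hs ▸ (hf x le_rfl).hasDerivWithinAt).congr
        (fun y hy => by rw [max_eq_left hy]) (by rw [max_self])
    rw [max_self, hs, ← hasDerivWithinAt_univ, ← Iic_union_Ici (a := x)]
    exact left.union right
  · rw [max_eq_left hgt.le]
    refine (hf x hgt.le).congr_of_eventuallyEq ?_
    filter_upwards [Ioi_mem_nhds hgt] with y hy
    rw [max_eq_left (le_of_lt hy)]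

variable {X : Type*} [MeasurableSpace X] {μ : Measure X} {p : X → ℝ}

lemma integrable_withDensity_ofReal_iff (hp : AEMeasurable p μ) (hp0 : 0 ≤ᵐ[μ] p) {f : X → E} :
    Integrable f (μ.withDensity fun x => ENNReal.ofReal (p x)) ↔
      Integrable (fun x => p x • f x) μ := by
  rw [integrable_withDensity_iff_integrable_smul₀' hp.ennreal_ofReal (by simp)]
  refine integrable_congr ?_
  filter_upwards [hp0] with x hx
  rw [ENNReal.toReal_ofReal hx]

lemma integral_withDensity_ofReal (hp : AEMeasurable p μ) (hp0 : 0 ≤ᵐ[μ] p) (f : X → E) :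
    ∫ x, f x ∂(μ.withDensity fun x => ENNReal.ofReal (p x)) = ∫ x, p x • f x ∂μ := by
  rw [integral_withDensity_eq_integral_toReal_smul₀ hp.ennreal_ofReal (by simp)]
  refine integral_congr_ae ?_
  filter_upwards [hp0] with x hx
  rw [ENNReal.toReal_ofReal hx]

end General

/-- The kernel `(1 - (u t)^α)₊` of the Kendall transform: the value at `t` of the homomorphism of
the Kendall convolution on the point mass at `u`. -/
noncomputable def kendallKernel (α t u : ℝ) : ℝ :=
  max (1 - (u * t) ^ α) 0

lemma rpow_neg_mul_kendallKernel (α : ℝ) {t u : ℝ} (ht : 0 ≤ t) (hu : 0 < u) :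
    u ^ (-α) * kendallKernel α t u = max (u ^ (-α) - t ^ α) 0 := by
  have cancel : u ^ (-α) * u ^ α = 1 := by
    rw [← Real.rpow_add hu, neg_add_cancel, Real.rpow_zero]
  rw [kendallKernel, mul_max_of_nonneg _ _ (by positivity), mul_zero, Real.mul_rpow hu.le ht,
    mul_sub, mul_one, ← mul_assoc, cancel, one_mul]

/-- The Kendall transform of a measure carried by `[0, ∞)`, encoded as a measure on `ℝ`. -/
noncomputable def kendallTransform (α : ℝ) (μ : Measure ℝ) (t : ℝ) : ℝ :=
  ∫ u, kendallKernel α t u ∂μ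

lemma kendallTransform_zero {α : ℝ} (hα : α ≠ 0) (μ : Measure ℝ) :
    kendallTransform α μ 0 = μ.real univ := by
  simp [kendallTransform, kendallKernel, Real.zero_rpow hα]

lemma kendallTransform_add {α t : ℝ} {μ ν : Measure ℝ} (hμ : Integrable (kendallKernel α t) μ)
    (hν : Integrable (kendallKernel α t) ν) :
    kendallTransform α (μ + ν) t = kendallTransform α μ t + kendallTransform α ν t :=
  integral_add_measure hμ hν

lemma integrable_kendallKernel_smul_dirac (α t c x : ℝ) :
    Integrable (kendallKernel α t) (ENNReal.ofReal c • Measure.dirac x) :=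
  (integrable_dirac (by simp)).smul_measure ENNReal.ofReal_ne_top

lemma kendallTransform_smul_dirac (α t x : ℝ) {c : ℝ} (hc : 0 ≤ c) :
    kendallTransform α (ENNReal.ofReal c • Measure.dirac x) t = c * kendallKernel α t x := by
  rw [kendallTransform, integral_smul_measure, integral_dirac, ENNReal.toReal_ofReal hc,
    smul_eq_mul]

/-- For `a > 0`, the tail integral `∫_w^∞ a² (x - s)₊ e^{-a x} dx`. -/
noncomputable def kendallTail (a s w : ℝ) : ℝ :=
  (a * (max w s - s) + 1) * Real.exp (-a * max w s)

lemma continuous_kendallTail (a s : ℝ) : Continuous (kendallTail a s) := by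
  unfold kendallTail
  fun_prop

lemma hasDerivAt_kendallTail (a s w : ℝ) :
    HasDerivAt (kendallTail a s) (-(a ^ 2 * max (w - s) 0 * Real.exp (-a * w))) w := by
  have untruncated (x : ℝ) : HasDerivAt (fun x => (a * (x - s) + 1) * Real.exp (-a * x))
      (-(a ^ 2 * (x - s) * Real.exp (-a * x))) x := by
    have linear := (((hasDerivAt_id' x).sub_const s).const_mul a).add_const 1
    refine (linear.mul ((hasDerivAt_id' x).const_mul (-a)).exp).congr_deriv ?_
    ring
  refine (hasDerivAt_comp_max_of_eq_zero (fun x _ => untruncated x) (by simp) w).congr_deriv ?_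
  rcases le_total w s with h | h <;> simp [h]

/-- The density of the absolutely continuous part `λ`, before restriction to `(1, ∞)`. -/
noncomputable def kendallPoissonDensity (α a u : ℝ) : ℝ :=
  a ^ 2 * α * u ^ (-(2 * α) - 1) * Real.exp (-a * u ^ (-α))

/-- The absolutely continuous part `λ` of the Kendall generalized Poisson measure. -/
noncomputable def kendallPoissonAC (α a : ℝ) : Measure ℝ :=
  (volume.restrict (Ioi 1)).withDensity fun u => ENNReal.ofReal (kendallPoissonDensity α a u)

/-- The Kendall generalized Poisson measure `Exp_{△_α}(a δ_1)`, given by its explicit formula. -/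
noncomputable def kendallPoissonMeasure (α a : ℝ) : Measure ℝ :=
  ENNReal.ofReal (Real.exp (-a)) • Measure.dirac 0
    + ENNReal.ofReal (a * Real.exp (-a)) • Measure.dirac 1
    + kendallPoissonAC α a

lemma measurable_kendallPoissonDensity (α a : ℝ) : Measurable (kendallPoissonDensity α a) := by
  unfold kendallPoissonDensity
  fun_prop

lemma kendallPoissonDensity_nonneg {α u : ℝ} (a : ℝ) (hα : 0 ≤ α) (hu : 0 ≤ u) :
    0 ≤ kendallPoissonDensity α a u := by
  unfold kendallPoissonDensity
  positivity

lemma kendallPoissonDensity_nonneg_ae {α : ℝ} (a : ℝ) (hα : 0 ≤ α) :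
    0 ≤ᵐ[volume.restrict (Ioi 1)] kendallPoissonDensity α a := by
  filter_upwards [ae_restrict_mem measurableSet_Ioi] with u hu
  exact kendallPoissonDensity_nonneg a hα (zero_lt_one.trans hu).le

lemma hasDerivAt_kendallTail_rpow (α a : ℝ) {t u : ℝ} (ht : 0 ≤ t) (hu : 0 < u) :
    HasDerivAt (fun u => kendallTail a (t ^ α) (u ^ (-α)))
      (kendallPoissonDensity α a u * kendallKernel α t u) u := by
  have substitution : HasDerivAt (fun u : ℝ => u ^ (-α)) (-α * u ^ (-α - 1)) u :=
    Real.hasDerivAt_rpow_const (Or.inl hu.ne')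
  refine ((hasDerivAt_kendallTail a (t ^ α) _).comp u substitution).congr_deriv ?_
  have split_power : u ^ (-(2 * α) - 1) = u ^ (-α) * u ^ (-α - 1) := by
    rw [← Real.rpow_add hu]
    ring_nf
  rw [← rpow_neg_mul_kendallKernel α ht hu, kendallPoissonDensity, split_power]
  ring

lemma tendsto_kendallTail_rpow {α s : ℝ} (a : ℝ) (hα : 0 < α) (hs : 0 ≤ s) :
    Tendsto (fun u : ℝ => kendallTail a s (u ^ (-α))) atTop (𝓝 (Real.exp (-a * s))) := by
  have value_zero : kendallTail a s 0 = Real.exp (-a * s) := by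
    simp [kendallTail, hs]
  exact value_zero ▸ ((continuous_kendallTail a s).tendsto 0).comp (tendsto_rpow_neg_atTop hα)

lemma kendallPoissonDensity_mul_kendallKernel_nonneg {α u : ℝ} (a : ℝ) (hα : 0 ≤ α) (t : ℝ)
    (hu : 0 ≤ u) :
    0 ≤ kendallPoissonDensity α a u * kendallKernel α t u :=
  mul_nonneg (kendallPoissonDensity_nonneg a hα hu) (le_max_right _ _)

lemma integrable_kendallKernel_kendallPoissonAC {α t : ℝ} (a : ℝ) (hα : 0 < α) (ht : 0 ≤ t) :
    Integrable (kendallKernel α t) (kendallPoissonAC α a) :=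
  (integrable_withDensity_ofReal_iff (measurable_kendallPoissonDensity α a).aemeasurable
    (kendallPoissonDensity_nonneg_ae a hα.le)).2 <|
  integrableOn_Ioi_deriv_of_nonneg'
    (fun _ hu => hasDerivAt_kendallTail_rpow α a ht (zero_lt_one.trans_le hu))
    (fun _ hu =>
      kendallPoissonDensity_mul_kendallKernel_nonneg a hα.le t (zero_lt_one.trans hu).le)
    (tendsto_kendallTail_rpow a hα (Real.rpow_nonneg ht α))

lemma kendallTransform_kendallPoissonAC {α t : ℝ} (a : ℝ) (hα : 0 < α) (ht : 0 ≤ t) :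
    kendallTransform α (kendallPoissonAC α a) t
      = Real.exp (-a * t ^ α) - kendallTail a (t ^ α) 1 := by
  rw [kendallTransform, kendallPoissonAC,
    integral_withDensity_ofReal (measurable_kendallPoissonDensity α a).aemeasurable
      (kendallPoissonDensity_nonneg_ae a hα.le)]
  simp only [smul_eq_mul]
  rw [integral_Ioi_of_hasDerivAt_of_nonneg'
    (fun _ hu => hasDerivAt_kendallTail_rpow α a ht (zero_lt_one.trans_le hu))
    (fun _ hu =>
      kendallPoissonDensity_mul_kendallKernel_nonneg a hα.le t (zero_lt_one.trans hu).le)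
    (tendsto_kendallTail_rpow a hα (Real.rpow_nonneg ht α)), Real.one_rpow]

lemma kendallTransform_kendallPoissonMeasure {α a t : ℝ} (hα : 0 < α) (ha : 0 ≤ a) (ht : 0 ≤ t) :
    kendallTransform α (kendallPoissonMeasure α a) t
      = Real.exp (-(a * (1 - max (1 - t ^ α) 0))) := by
  have atom_zero : kendallKernel α t 0 = 1 := by
    simp [kendallKernel, Real.zero_rpow hα.ne']
  have atom_one : kendallKernel α t 1 = max (1 - t ^ α) 0 := by
    rw [kendallKernel, one_mul]
  have decomposition : kendallTransform α (kendallPoissonMeasure α a) t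
      = Real.exp (-a) + a * Real.exp (-a) * max (1 - t ^ α) 0
        + (Real.exp (-a * t ^ α) - kendallTail a (t ^ α) 1) := by
    have integrable_atom := integrable_kendallKernel_smul_dirac α t
    rw [kendallPoissonMeasure,
      kendallTransform_add ((integrable_atom _ 0).add_measure (integrable_atom _ 1))
        (integrable_kendallKernel_kendallPoissonAC a hα ht),
      kendallTransform_add (integrable_atom _ 0) (integrable_atom _ 1),
      kendallTransform_smul_dirac α t 0 (by positivity),
      kendallTransform_smul_dirac α t 1 (by positivity), atom_zero, atom_one, mul_one,
      kendallTransform_kendallPoissonAC a hα ht]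
  rw [decomposition, kendallTail]
  rcases le_total (t ^ α) 1 with hle | hge
  · rw [max_eq_left hle, max_eq_left (sub_nonneg.2 hle), sub_sub_cancel, neg_mul]
    ring_nf
  · rw [max_eq_right hge, max_eq_right (sub_nonpos.2 hge)]
    ring_nf

lemma isProbabilityMeasure_kendallPoissonMeasure {α a : ℝ} (hα : 0 < α) (ha : 0 ≤ a) :
    IsProbabilityMeasure (kendallPoissonMeasure α a) := by
  rw [isProbabilityMeasure_iff_real, ← kendallTransform_zero hα.ne',
    kendallTransform_kendallPoissonMeasure hα ha le_rfl]
  simp [Real.zero_rpow hα.ne']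

end KendallPoisson

/-- The Kendall generalized Poisson measure `Exp_{△_α}(a δ_1)`: the measure
`e^{-a} δ_0 + a e^{-a} δ_1 + λ`, where `λ` has density `a² α u^{-2α-1} e^{-a u^{-α}}`
on `(1,∞)`, is a probability measure whose Kendall transform is `exp(-a(1-(1-t^α)_+))`. -/
theorem kendall_poisson_measure (α a : ℝ) (hα : 0 < α) (ha : 0 < a) :
    IsProbabilityMeasure
      (ENNReal.ofReal (Real.exp (-a)) • Measure.dirac (0 : ℝ)
        + ENNReal.ofReal (a * Real.exp (-a)) • Measure.dirac (1 : ℝ)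
        + (volume.restrict (Set.Ioi (1 : ℝ))).withDensity
            (fun u => ENNReal.ofReal
              (a ^ 2 * α * u ^ (-(2 * α) - 1) * Real.exp (-a * u ^ (-α))))) ∧
    ∀ t : ℝ, 0 ≤ t →
      ∫ u, max (1 - (u * t) ^ α) 0
          ∂(ENNReal.ofReal (Real.exp (-a)) • Measure.dirac (0 : ℝ)
            + ENNReal.ofReal (a * Real.exp (-a)) • Measure.dirac (1 : ℝ)
            + (volume.restrict (Set.Ioi (1 : ℝ))).withDensity
                (fun u => ENNReal.ofReal
                  (a ^ 2 * α * u ^ (-(2 * α) - 1) * Real.exp (-a * u ^ (-α)))))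
        = Real.exp (-(a * (1 - max (1 - t ^ α) 0))) :=
  ⟨KendallPoisson.isProbabilityMeasure_kendallPoissonMeasure hα ha.le,
    fun _ ht => KendallPoisson.kendallTransform_kendallPoissonMeasure hα ha.le ht⟩
end

section
/- Let s > −1/2 and let Θ be a random variable with density f_s(u) = (Γ(s+1)/(√π · Γ(s+½))) (1 − u²)_+^{s−1/2}. Then for all x, y > 0, the topological support of the law of √(x² + y² + 2xyΘ) equals the interval [|x−y|, x+y]. (In particular, for x,y > 0 the Kingman convolution δ_x ⊗_{ω_s} δ_y assigns positive mass to [|x−y|, max(x,y)), so the Kingman convolution is not monotonic.) -/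
open MeasureTheory

/-!
An open set has positive mass exactly when it meets the support, so a continuous map carries the
support of a measure to the support of its image, up to closure. The density of `Θ` is positive
exactly on `(-1, 1)`, so its law has support `[-1, 1]`. The map `u ↦ √(x² + y² + 2xyu)` is
continuous and monotone, hence it takes `[-1, 1]` onto the interval between its endpoint values
`√((x - y)²)` and `√((x + y)²)`.
-/

section Support

variable {X Y : Type*} [TopologicalSpace X] [MeasurableSpace X]
  [TopologicalSpace Y] [MeasurableSpace Y] {μ : Measure X}

lemma measure_pos_iff_inter_support_nonempty [HereditarilyLindelofSpace X] {U : Set X}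
    (hU : IsOpen U) : 0 < μ U ↔ (U ∩ μ.support).Nonempty := by
  refine ⟨Measure.nonempty_inter_support_of_pos, ?_⟩
  rintro ⟨x, hxU, hx⟩
  exact (Measure.mem_support_iff_forall x).1 hx U (hU.mem_nhds hxU)

lemma support_eq_closure_of_forall_isOpen {s : Set X}
    (h : ∀ U, IsOpen U → (0 < μ U ↔ (U ∩ s).Nonempty)) : μ.support = closure s := by
  ext x
  rw [(nhds_basis_opens x).mem_measureSupport, mem_closure_iff]
  constructor
  · exact fun hx U hU hxU => (h U hU).1 (hx U ⟨hxU, hU⟩)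
  · exact fun hx U ⟨hxU, hU⟩ => (h U hU).2 (hx U hU hxU)

lemma support_map_eq_closure_image [HereditarilyLindelofSpace X] [OpensMeasurableSpace Y]
    {g : X → Y} (hg : Continuous g) (hgm : AEMeasurable g μ) :
    (μ.map g).support = closure (g '' μ.support) := by
  refine support_eq_closure_of_forall_isOpen fun U hU => ?_
  rw [Measure.map_apply_of_aemeasurable hgm hU.measurableSet,
    measure_pos_iff_inter_support_nonempty (hU.preimage hg), Set.inter_comm,
    ← Set.image_inter_nonempty_iff, Set.inter_comm]

lemma support_withDensity_eq_closure [μ.IsOpenPosMeasure]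
    {f : X → ENNReal} (hf : AEMeasurable f μ) (hsupp : IsOpen (Function.support f)) :
    (μ.withDensity f).support = closure (Function.support f) := by
  refine support_eq_closure_of_forall_isOpen fun U hU => ?_
  rw [pos_iff_ne_zero, Ne, withDensity_apply_eq_zero' hf, ← Ne, ← pos_iff_ne_zero,
    Set.inter_comm U]
  exact (hsupp.inter hU).measure_pos_iff μ

end Support

section KingmanDensity

variable {s : ℝ}

/-- The density `f_s` of `Θ`. It vanishes at `±1`, where `(1 - u²)_+^{s - 1/2}` would be infinite
for `s < 1/2`. -/
noncomputable def kingmanDensity (s : ℝ) : ℝ → ℝ :=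
  Set.indicator (Set.Ioo (-1 : ℝ) 1) fun u =>
    Real.Gamma (s + 1) / (Real.sqrt Real.pi * Real.Gamma (s + 1 / 2)) * (1 - u ^ 2) ^ (s - 1 / 2)

@[fun_prop]
lemma measurable_kingmanDensity : Measurable (kingmanDensity s) :=
  Measurable.indicator (by fun_prop) measurableSet_Ioo

lemma kingmanDensity_pos_iff (hs : -(1 / 2 : ℝ) < s) {u : ℝ} :
    0 < kingmanDensity s u ↔ u ∈ Set.Ioo (-1 : ℝ) 1 := by
  refine ⟨fun h => Set.mem_of_indicator_ne_zero h.ne', fun hu => ?_⟩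
  have hΓ : 0 < Real.Gamma (s + 1) := Real.Gamma_pos_of_pos (by linarith)
  have hΓ' : 0 < Real.Gamma (s + 1 / 2) := Real.Gamma_pos_of_pos (by linarith)
  have hu_sq : 0 < 1 - u ^ 2 := by nlinarith [hu.1, hu.2]
  rw [kingmanDensity, Set.indicator_of_mem hu]
  positivity

lemma support_withDensity_kingmanDensity (hs : -(1 / 2 : ℝ) < s) :
    (volume.withDensity fun u => ENNReal.ofReal (kingmanDensity s u)).support =
      Set.Icc (-1 : ℝ) 1 := by
  have hsupp : (Function.support fun u => ENNReal.ofReal (kingmanDensity s u)) =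
      Set.Ioo (-1 : ℝ) 1 := by
    ext u
    rw [Function.mem_support, ← pos_iff_ne_zero, ENNReal.ofReal_pos, kingmanDensity_pos_iff hs]
  rw [support_withDensity_eq_closure (by fun_prop) (hsupp ▸ isOpen_Ioo), hsupp,
    closure_Ioo (by norm_num)]

end KingmanDensity

section CosineLaw

variable {x y : ℝ}

/-- The length of the sum of two vectors of lengths `x` and `y` whose angle has cosine `u`; it
sends `Θ` to the random variable with law `δ_x ⊗_{ω_s} δ_y`. -/
noncomputable def cosineLaw (x y u : ℝ) : ℝ := Real.sqrt (x ^ 2 + y ^ 2 + 2 * x * y * u)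

lemma continuous_cosineLaw : Continuous (cosineLaw x y) := by
  unfold cosineLaw
  fun_prop

lemma monotone_cosineLaw (hxy : 0 ≤ x * y) : Monotone (cosineLaw x y) := by
  intro u v huv
  apply Real.sqrt_le_sqrt
  nlinarith

lemma cosineLaw_neg_one : cosineLaw x y (-1) = |x - y| := by
  rw [cosineLaw, ← Real.sqrt_sq_eq_abs]
  ring_nf

lemma cosineLaw_one : cosineLaw x y 1 = |x + y| := by
  rw [cosineLaw, ← Real.sqrt_sq_eq_abs]
  ring_nf

lemma cosineLaw_image_Icc (hxy : 0 ≤ x * y) :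
    cosineLaw x y '' Set.Icc (-1) 1 = Set.Icc |x - y| |x + y| := by
  rw [continuous_cosineLaw.continuousOn.image_Icc_of_monotoneOn (by norm_num)
    ((monotone_cosineLaw hxy).monotoneOn _), cosineLaw_neg_one, cosineLaw_one]

lemma support_map_cosineLaw {ν : Measure ℝ} (hν : ν.support = Set.Icc (-1) 1) (hxy : 0 ≤ x * y) :
    (ν.map (cosineLaw x y)).support = Set.Icc |x - y| |x + y| := by
  rw [support_map_eq_closure_image continuous_cosineLaw continuous_cosineLaw.aemeasurable, hν,
    cosineLaw_image_Icc hxy, isClosed_Icc.closure_eq]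

end CosineLaw

/-- For `Θ` with density `f_s(u) = (Γ(s+1)/(√π Γ(s+1/2)))(1-u²)_+^{s-1/2}` on `(-1,1)`,
the topological support of the law of `√(x² + y² + 2xyΘ)` (the Kingman convolution
`δ_x ⊗_{ω_s} δ_y`) is the interval `[|x-y|, x+y]`; in particular the Kingman convolution
is not monotonic. A point `z` lies in the topological support iff every ball around `z`
has positive measure. -/
theorem kingman_kernel_support {Ω : Type*} [MeasurableSpace Ω] (μ : Measure Ω)
    [IsProbabilityMeasure μ] (s : ℝ) (hs : -(1 / 2 : ℝ) < s)
    (Θ : Ω → ℝ) (hΘ : Measurable Θ)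
    (hdist : μ.map Θ = volume.withDensity (fun u => ENNReal.ofReal
      (Set.indicator (Set.Ioo (-1 : ℝ) 1)
        (fun u => Real.Gamma (s + 1) / (Real.sqrt Real.pi * Real.Gamma (s + 1 / 2)) *
          (1 - u ^ 2) ^ (s - 1 / 2)) u)))
    (x y : ℝ) (hx : 0 < x) (hy : 0 < y) :
    ∀ z : ℝ,
      (∀ ε : ℝ, 0 < ε →
        0 < (μ.map (fun ω => Real.sqrt (x ^ 2 + y ^ 2 + 2 * x * y * Θ ω))) (Metric.ball z ε))
        ↔ z ∈ Set.Icc |x - y| (x + y) := by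
  intro z
  have hΘ_support : (μ.map Θ).support = Set.Icc (-1) 1 :=
    hdist ▸ support_withDensity_kingmanDensity hs
  have hmap : μ.map (fun ω => Real.sqrt (x ^ 2 + y ^ 2 + 2 * x * y * Θ ω)) =
      (μ.map Θ).map (cosineLaw x y) :=
    (Measure.map_map continuous_cosineLaw.measurable hΘ).symm
  rw [← Metric.nhds_basis_ball.mem_measureSupport, hmap,
    support_map_cosineLaw hΘ_support (by positivity), abs_of_pos (add_pos hx hy)]
end

section
/- Let α > 0, s > 0 and let i ≥ 1 be an integer. Then lim_{t → s⁺} (1/(t−s)) · ∑_{n=1}^{∞} n^i · ((t^α − s^α)^n / n!) · e^{−(t^α − s^α)} = α s^{α−1}. (Consequently the generating operator of the proper ⋆_α-generalized Poisson process of type II acts on polynomials W by A_s W(k) = α s^{α−1} (W(k+1) − W(k)).) -/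
/-!
Put `u = f t - f s`, where `f t = t ^ α`. As a function of `u`, the moment is `exp (-u)` times a
power series without constant term whose linear coefficient is `1`, so it vanishes at `u = 0` with
derivative `1` there. By the chain rule, its composition with `t ↦ f t - f s` has derivative `f' s`
at `s`, and the limit in question is that of the corresponding slopes.
-/

open Filter

open scoped Topology Nat

section PowerSeries

variable {𝕜 E : Type*} [NontriviallyNormedField 𝕜] [NormedAddCommGroup E] [NormedSpace 𝕜 E]
  [CompleteSpace E] {c : ℕ → E}

lemma continuousAt_tsum_pow_smul_zero (hc : Summable fun n => ‖c n‖) :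
    ContinuousAt (fun u : 𝕜 => ∑' n, u ^ n • c n) 0 := by
  have hcont : ContinuousOn (fun u : 𝕜 => ∑' n, u ^ n • c n) (Metric.closedBall 0 1) := by
    refine continuousOn_tsum (fun n => by fun_prop) hc fun n u hu => ?_
    rw [norm_smul, norm_pow]
    exact mul_le_of_le_one_left (norm_nonneg _)
      (pow_le_one₀ (norm_nonneg u) (mem_closedBall_zero_iff.1 hu))
  exact hcont.continuousAt (Metric.closedBall_mem_nhds 0 one_pos)

lemma hasDerivAt_tsum_pow_succ_smul_zero (hc : Summable fun n => ‖c n‖) :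
    HasDerivAt (fun u : 𝕜 => ∑' n, u ^ (n + 1) • c n) (c 0) 0 := by
  have hlim : Tendsto (fun u : 𝕜 => ∑' n, u ^ n • c n) (𝓝[≠] 0) (𝓝 (c 0)) := by
    have hzero : ∑' n, (0 : 𝕜) ^ n • c n = c 0 := by
      rw [tsum_eq_single 0 fun n hn => by rw [zero_pow hn, zero_smul], pow_zero, one_smul]
    simpa only [hzero] using
      (continuousAt_tsum_pow_smul_zero (𝕜 := 𝕜) hc).tendsto.mono_left nhdsWithin_le_nhds
  refine hasDerivAt_iff_tendsto_slope_zero.2 (hlim.congr' ?_)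
  filter_upwards [self_mem_nhdsWithin] with u hu
  have hfactor : ∑' n, u ^ (n + 1) • c n = u • ∑' n, u ^ n • c n := by
    simp_rw [pow_succ', mul_smul, tsum_const_smul'']
  simp [hfactor, inv_smul_smul₀ hu]

end PowerSeries

lemma summable_pow_mul_pow_div_factorial (i : ℕ) (x : ℝ) :
    Summable fun n : ℕ => (n : ℝ) ^ i * x ^ n / n ! := by
  refine Summable.of_norm_bounded
    ((Real.summable_pow_div_factorial (Real.exp 1 * |x|)).mul_left (i ! : ℝ)) fun n => ?_
  have hpow : (n : ℝ) ^ i ≤ i ! * Real.exp 1 ^ n := by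
    rw [← Real.exp_nat_mul, mul_one, ← div_le_iff₀' (by positivity)]
    exact Real.pow_div_factorial_le_exp n n.cast_nonneg i
  calc ‖(n : ℝ) ^ i * x ^ n / (n)!‖ = (n : ℝ) ^ i * |x| ^ n / n ! := by simp
    _ ≤ i ! * Real.exp 1 ^ n * |x| ^ n / n ! := by gcongr
    _ = i ! * ((Real.exp 1 * |x|) ^ n / n !) := by ring

/-- The `i`-th moment of the Poisson distribution with parameter `u`, for `i ≥ 1`. The sum runs over
the positive integers, written `n + 1`, so that `i = 0` gives the mass of the positive integers. -/
noncomputable def poissonMoment (i : ℕ) (u : ℝ) : ℝ :=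
  ∑' n : ℕ, ((n : ℝ) + 1) ^ i * u ^ (n + 1) / (n + 1)! * Real.exp (-u)

lemma poissonMoment_eq_tsum_mul_exp (i : ℕ) (u : ℝ) :
    poissonMoment i u =
      (∑' n : ℕ, u ^ (n + 1) • (((n : ℝ) + 1) ^ i / (n + 1)!)) * Real.exp (-u) := by
  simp_rw [poissonMoment, tsum_mul_right, smul_eq_mul, mul_div_assoc, mul_div_left_comm]

lemma poissonMoment_zero (i : ℕ) : poissonMoment i 0 = 0 := by
  simp [poissonMoment]

lemma hasDerivAt_poissonMoment_zero (i : ℕ) : HasDerivAt (poissonMoment i) 1 0 := by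
  have hsum : Summable fun n : ℕ => ‖((n : ℝ) + 1) ^ i / (n + 1)!‖ := by
    simpa using ((summable_nat_add_iff 1).2 (summable_pow_mul_pow_div_factorial i 1)).norm
  have hseries := hasDerivAt_tsum_pow_succ_smul_zero (𝕜 := ℝ) hsum
  have hexp : HasDerivAt (fun u : ℝ => Real.exp (-u)) (-1) 0 := by
    simpa using (hasDerivAt_neg (0 : ℝ)).exp
  rw [funext (poissonMoment_eq_tsum_mul_exp i)]
  simpa using hseries.fun_mul hexp

theorem poisson_moment_generating_limit_general {f : ℝ → ℝ} {f' s : ℝ} {S : Set ℝ}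
    (hf : HasDerivWithinAt f f' S s) (hs : s ∉ S) (i : ℕ) :
    Tendsto (fun t => poissonMoment i (f t - f s) / (t - s)) (𝓝[S] s) (𝓝 f') := by
  have hmoment : HasDerivWithinAt (fun t => poissonMoment i (f t - f s)) f' S s := by
    simpa only [one_mul, Function.comp_def] using
      (hasDerivAt_poissonMoment_zero i).comp_hasDerivWithinAt_of_eq s (hf.sub_const (f s))
        (sub_self (f s)).symm
  simpa only [slope_fun_def_field, sub_self, poissonMoment_zero, sub_zero] using
    (hasDerivWithinAt_iff_tendsto_slope' hs).1 hmoment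

/-- For every `i ≥ 1`, the `i`-th moment of the Poisson distribution with parameter
`t^α - s^α`, divided by `t - s`, tends to `α s^{α-1}` as `t → s⁺`. Consequently the
generating operator of the proper ⋆_α-generalized Poisson process of type II acts on
polynomials `W` by `A_s W(k) = α s^{α-1}(W(k+1) - W(k))`. -/
theorem poisson_moment_generating_limit (α s : ℝ) (hα : 0 < α) (hs : 0 < s)
    (i : ℕ) (hi : 1 ≤ i) :
    Tendsto
      (fun t : ℝ =>
        (∑' n : ℕ, ((n : ℝ) + 1) ^ i * (t ^ α - s ^ α) ^ (n + 1) / (n + 1).factorial *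
          Real.exp (-(t ^ α - s ^ α))) / (t - s))
      (nhdsWithin s (Set.Ioi s))
      (nhds (α * s ^ (α - 1))) := by
  exact poisson_moment_generating_limit_general
    (Real.hasDerivAt_rpow_const (.inl hs.ne')).hasDerivWithinAt Set.self_notMem_Ioi i
end

section
/- Let α > 0, let ν be a probability measure on [0,∞) with cumulative distribution function F, and set G(t) = ∫_{[0,∞)} (1 − x^α/t^α)_+ ν(dx) for t > 0. For n ≥ 1 let μ_n be a probability measure on [0,∞), with cumulative distribution function F_n, such that ∫_{[0,∞)} (1 − x^α/t^α)_+ μ_n(dx) = G(t)^n for all t > 0. Then at every t > 0 at which F and F_n are continuous: (i) F_n(t) = G(t)^{n−1} [ n(F(t) − G(t)) + G(t) ], and (ii) ∫_{[0,t]} x^α μ_n(dx) = n t^α G(t)^{n−1} (F(t) − G(t)). -/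
open MeasureTheory

/-!
At every `t > 0` the Kendall transform `G` of a finite measure on `[0,∞)` with distribution
function `F` has the right derivative `G'(t+) = (α / t) (F(t) - G(t))`: in the variable `s = t ^ α`,
the right derivative of `s ↦ (s - x ^ α)₊` is the indicator of `x ^ α ≤ s`. Taking right derivatives
of `G_n = G ^ n` therefore gives `F_n - G ^ n = n G ^ (n - 1) (F - G)`, which is (i).
Since `∫_{[0,t]} x ^ α dμ = t ^ α (F(t) - G(t))` for every such measure `μ`, it is (ii) as well.
-/

open Filter Set Topology

section RightDerivative

variable {Ω : Type*} [MeasurableSpace Ω] {μ : Measure Ω}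

lemma hasDerivWithinAt_integral_of_dominated_of_lip {E : Type*} [NormedAddCommGroup E]
    [NormedSpace ℝ E] {F : ℝ → Ω → E} {F' : Ω → E} {bound : Ω → ℝ} {S : Set ℝ} {s : ℝ}
    (hFs : Integrable (F s) μ) (hF : ∀ u ∈ S, Integrable (F u) μ) (hbound : Integrable bound μ)
    (hlip : ∀ᵐ ω ∂μ, ∀ u ∈ S, ‖F u ω - F s ω‖ ≤ bound ω * |u - s|)
    (hderiv : ∀ᵐ ω ∂μ, HasDerivWithinAt (fun u => F u ω) (F' ω) S s) :
    HasDerivWithinAt (fun u => ∫ ω, F u ω ∂μ) (∫ ω, F' ω ∂μ) S s := by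
  have hslope : ∀ u ∈ S, ∫ ω, slope (fun v => F v ω) s u ∂μ =
      slope (fun v => ∫ ω, F v ω ∂μ) s u := by
    intro u hu
    simp only [slope_def_module, integral_smul, integral_sub (hF u hu) hFs]
  rw [hasDerivWithinAt_iff_tendsto_slope]
  refine Tendsto.congr' (eventually_mem_nhdsWithin.mono fun u hu => hslope u hu.1)
    (tendsto_integral_filter_of_dominated_convergence bound ?_ ?_ hbound ?_)
  · filter_upwards [self_mem_nhdsWithin] with u hu
    simp only [slope_def_module]
    exact (((hF u hu.1).sub hFs).smul _).aestronglyMeasurable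
  · filter_upwards [self_mem_nhdsWithin] with u hu
    filter_upwards [hlip] with ω hω
    have hus : 0 < |u - s| := abs_pos.2 (sub_ne_zero.2 hu.2)
    rw [slope_def_module, norm_smul, norm_inv, Real.norm_eq_abs, inv_mul_le_iff₀ hus, mul_comm]
    exact hω u hu.1
  · filter_upwards [hderiv] with ω hω using hasDerivWithinAt_iff_tendsto_slope.1 hω

lemma hasDerivWithinAt_Ici_max_sub (y s : ℝ) :
    HasDerivWithinAt (fun u => max (u - y) 0) ((Iic s).indicator 1 y) (Ici s) s := by
  rcases le_or_gt y s with hys | hsy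
  · rw [indicator_of_mem (mem_Iic.2 hys)]
    exact ((hasDerivAt_id s).sub_const y).hasDerivWithinAt.congr_of_mem
      (fun u hu => max_eq_left (sub_nonneg.2 (hys.trans hu))) self_mem_Ici
  · rw [indicator_of_notMem (notMem_Iic.2 hsy)]
    refine ((hasDerivAt_const s (0 : ℝ)).congr_of_eventuallyEq ?_).hasDerivWithinAt
    filter_upwards [gt_mem_nhds hsy] with u hu using max_eq_right (sub_nonpos.2 hu.le)

lemma hasDerivWithinAt_Ici_integral_max_sub [IsFiniteMeasure μ] {f : Ω → ℝ} (hf : Measurable f)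
    (hint : ∀ u, Integrable (fun ω => max (u - f ω) 0) μ) (s : ℝ) :
    HasDerivWithinAt (fun u => ∫ ω, max (u - f ω) 0 ∂μ) (μ.real {ω | f ω ≤ s}) (Ici s) s := by
  rw [← integral_indicator_one (measurableSet_le hf measurable_const)]
  refine hasDerivWithinAt_integral_of_dominated_of_lip (hint s) (fun u _ => hint u)
    (integrable_const 1) ?_ (ae_of_all _ fun ω => hasDerivWithinAt_Ici_max_sub (f ω) s)
  refine ae_of_all _ fun ω u _ => ?_
  calc ‖max (u - f ω) 0 - max (s - f ω) 0‖
      ≤ |(u - f ω) - (s - f ω)| := abs_max_sub_max_le_abs _ _ _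
    _ = 1 * |u - s| := by rw [sub_sub_sub_cancel_right, one_mul]

lemma integrable_max_sub [IsFiniteMeasure μ] {f : Ω → ℝ} (hf : AEMeasurable f μ)
    (hf_nonneg : 0 ≤ᵐ[μ] f) (s : ℝ) : Integrable (fun ω => max (s - f ω) 0) μ := by
  refine .of_bound ((hf.const_sub s).max aemeasurable_const).aestronglyMeasurable |s| ?_
  filter_upwards [hf_nonneg] with ω (hω : 0 ≤ f ω)
  rw [Real.norm_of_nonneg (le_max_right _ _)]
  exact max_le ((sub_le_self s hω).trans (le_abs_self s)) (abs_nonneg s)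

end RightDerivative

/-- The Kendall transform of order `α` (Williamson transform) of a measure on `[0,∞)`, which plays
for the Kendall convolution the role of the characteristic function. The measure lives on `ℝ`, where
`x ^ α` is meaningful only for `0 ≤ x`, so it is to give no mass to the negative half-line. -/
noncomputable def kendallTransform (α : ℝ) (μ : Measure ℝ) (t : ℝ) : ℝ :=
  ∫ x, max (1 - x ^ α / t ^ α) 0 ∂μ

section KendallTransform

variable {α t : ℝ} {μ : Measure ℝ}

lemma ae_nonneg_of_measure_Iio_zero (hμ : μ (Iio 0) = 0) : ∀ᵐ x ∂μ, 0 ≤ x := by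
  simpa only [mem_Iio, not_lt] using measure_eq_zero_iff_ae_notMem.1 hμ

lemma kendallTransform_eq_div (ht : 0 < t) :
    kendallTransform α μ t = (∫ x, max (t ^ α - x ^ α) 0 ∂μ) / t ^ α := by
  have hs : 0 < t ^ α := Real.rpow_pos_of_pos ht α
  rw [kendallTransform, ← integral_div]
  congr with x
  rw [← max_div_div_right hs.le, sub_div, div_self hs.ne', zero_div]

variable [IsFiniteMeasure μ]

lemma hasDerivWithinAt_integral_max_sub_rpow (hα : 0 < α) (hμ : μ (Iio 0) = 0) (ht : 0 ≤ t) :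
    HasDerivWithinAt (fun s => ∫ x, max (s - x ^ α) 0 ∂μ) (μ.real (Iic t)) (Ici (t ^ α))
      (t ^ α) := by
  have hmeas : Measurable fun x : ℝ => x ^ α := measurable_id.pow_const α
  have hnonneg := ae_nonneg_of_measure_Iio_zero hμ
  have hIic : μ.real (Iic t) = μ.real {x | x ^ α ≤ t ^ α} := by
    refine measureReal_congr ?_
    filter_upwards [hnonneg] with x hx
    exact propext (Real.rpow_le_rpow_iff hx ht hα).symm
  rw [hIic]
  refine hasDerivWithinAt_Ici_integral_max_sub hmeas (integrable_max_sub hmeas.aemeasurable ?_) _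
  filter_upwards [hnonneg] with x hx using Real.rpow_nonneg hx α

theorem hasDerivWithinAt_kendallTransform (hα : 0 < α) (hμ : μ (Iio 0) = 0) (ht : 0 < t) :
    HasDerivWithinAt (kendallTransform α μ)
      (α / t * (μ.real (Iic t) - kendallTransform α μ t)) (Ici t) t := by
  have hs : t ^ α ≠ 0 := (Real.rpow_pos_of_pos ht α).ne'
  have hpow : HasDerivWithinAt (fun u : ℝ => u ^ α) (α * t ^ (α - 1)) (Ici t) t :=
    (Real.hasDerivAt_rpow_const (Or.inl ht.ne')).hasDerivWithinAt
  have hmaps : MapsTo (fun u : ℝ => u ^ α) (Ici t) (Ici (t ^ α)) :=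
    fun u hu => Real.rpow_le_rpow ht.le hu hα.le
  have hquot :=
    ((hasDerivWithinAt_integral_max_sub_rpow hα hμ ht.le).comp t hpow hmaps).div hpow hs
  refine (hquot.congr_of_mem (fun u hu => kendallTransform_eq_div (ht.trans_le hu))
    self_mem_Ici).congr_deriv ?_
  rw [kendallTransform_eq_div ht, Real.rpow_sub_one ht.ne', Function.comp_apply]
  field_simp

theorem setIntegral_Icc_rpow_eq (hα : 0 < α) (hμ : μ (Iio 0) = 0) (ht : 0 < t) :
    ∫ x in Icc 0 t, x ^ α ∂μ = t ^ α * (μ.real (Iic t) - kendallTransform α μ t) := by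
  have hnonneg := ae_nonneg_of_measure_Iio_zero hμ
  have hIcc : μ.real (Icc 0 t) = μ.real (Iic t) := by
    refine measureReal_congr ?_
    filter_upwards [hnonneg] with x hx
    exact propext (and_iff_right hx)
  have hint : IntegrableOn (fun x : ℝ => x ^ α) (Icc 0 t) μ :=
    (Real.continuous_rpow_const hα.le).continuousOn.integrableOn_compact isCompact_Icc
  have htrunc : ∫ x, max (t ^ α - x ^ α) 0 ∂μ = ∫ x in Icc 0 t, (t ^ α - x ^ α) ∂μ := by
    rw [← integral_indicator measurableSet_Icc]
    refine integral_congr_ae ?_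
    filter_upwards [hnonneg] with x hx
    rcases le_or_gt x t with hxt | htx
    · rw [indicator_of_mem (mem_Icc.2 ⟨hx, hxt⟩)]
      exact max_eq_left (sub_nonneg.2 (Real.rpow_le_rpow hx hxt hα.le))
    · rw [indicator_of_notMem fun h => htx.not_ge h.2]
      exact max_eq_right (sub_nonpos.2 (Real.rpow_le_rpow ht.le htx.le hα.le))
  rw [kendallTransform_eq_div ht, htrunc, integral_sub (integrable_const _) hint,
    setIntegral_const, hIcc, smul_eq_mul]
  field_simp
  ring

lemma measureReal_Iic_sub_kendallTransform_of_eq_pow (hα : 0 < α) {ν : Measure ℝ}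
    [IsFiniteMeasure ν] (hν : ν (Iio 0) = 0) (hμ : μ (Iio 0) = 0) {n : ℕ}
    (hpow : ∀ u, 0 < u → kendallTransform α μ u = kendallTransform α ν u ^ n) (ht : 0 < t) :
    μ.real (Iic t) - kendallTransform α μ t =
      n * kendallTransform α ν t ^ (n - 1) * (ν.real (Iic t) - kendallTransform α ν t) := by
  have hderiv_pow := ((hasDerivWithinAt_kendallTransform hα hν ht).pow n).congr_of_mem
    (fun u hu => hpow u (ht.trans_le hu)) self_mem_Ici
  have hderiv_eq := (uniqueDiffWithinAt_Ici t).eq_deriv _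
    (hasDerivWithinAt_kendallTransform hα hμ ht) hderiv_pow
  refine mul_left_cancel₀ (div_pos hα ht).ne' (hderiv_eq.trans ?_)
  ring

theorem kendall_walk_cdf_general (hα : 0 < α) {ν : Measure ℝ} [IsFiniteMeasure ν]
    (hν : ν (Iio 0) = 0) (hμ : μ (Iio 0) = 0) {n : ℕ} (hn : 1 ≤ n)
    (hpow : ∀ u, 0 < u → kendallTransform α μ u = kendallTransform α ν u ^ n) (ht : 0 < t) :
    μ.real (Iic t) = kendallTransform α ν t ^ (n - 1) *
        (n * (ν.real (Iic t) - kendallTransform α ν t) + kendallTransform α ν t) ∧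
      ∫ x in Icc 0 t, x ^ α ∂μ = n * t ^ α * kendallTransform α ν t ^ (n - 1) *
        (ν.real (Iic t) - kendallTransform α ν t) := by
  have hdiff := measureReal_Iic_sub_kendallTransform_of_eq_pow hα hν hμ hpow ht
  constructor
  · rw [eq_add_of_sub_eq hdiff, hpow t ht, ← pow_sub_one_mul (Nat.one_le_iff_ne_zero.1 hn)]
    ring
  · rw [setIntegral_Icc_rpow_eq hα hμ ht, hdiff]
    ring

end KendallTransform

/-- For the Kendall random walk: if `ν` is a probability measure on `[0,∞)` with cdf `F` and
Kendall transform `G`, and `μ_n` (the n-fold Kendall convolution power of `ν`) has cdf `F_n`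
and Kendall transform `G^n`, then at every continuity point `t > 0` of `F` and `F_n`:
`F_n(t) = G(t)^{n-1}[n(F(t)-G(t)) + G(t)]` and
`∫_{[0,t]} x^α μ_n(dx) = n t^α G(t)^{n-1}(F(t)-G(t))`. -/
theorem kendall_walk_cdf (α : ℝ) (hα : 0 < α)
    (ν : Measure ℝ) [IsProbabilityMeasure ν] (hν : ν (Set.Iio 0) = 0)
    (n : ℕ) (hn : 1 ≤ n)
    (μn : Measure ℝ) [IsProbabilityMeasure μn] (hμn : μn (Set.Iio 0) = 0)
    (F : ℝ → ℝ) (hF : F = fun t => (ν (Set.Iic t)).toReal)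
    (Fn : ℝ → ℝ) (hFn : Fn = fun t => (μn (Set.Iic t)).toReal)
    (G : ℝ → ℝ) (hG : G = fun t => ∫ x, max (1 - x ^ α / t ^ α) 0 ∂ν)
    (htransform : ∀ t : ℝ, 0 < t →
      ∫ x, max (1 - x ^ α / t ^ α) 0 ∂μn = (G t) ^ n)
    (t : ℝ) (ht : 0 < t) (hFc : ContinuousAt F t) (hFnc : ContinuousAt Fn t) :
    Fn t = (G t) ^ (n - 1) * (n * (F t - G t) + G t) ∧
    ∫ x in Set.Icc 0 t, x ^ α ∂μn = n * t ^ α * (G t) ^ (n - 1) * (F t - G t) := by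
  subst hF hFn hG
  exact kendall_walk_cdf_general hα hν hμn hn htransform ht
end
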